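/- Let X be a strictly stable random variable with parameters (ν, θ, τ). Then E[(log|X|)⁵] = τ⁵ + 10τ³·DV + 20τ²·ζ(3)(ν^{3/2} − 1) + 15τ·DV² + 5τ·π⁴((1 − θ⁴)/8 + (ν² − 1)/15) + 20ζ(3)(ν^{3/2} − 1)·DV + 24ζ(5)(ν^{5/2} − 1). -/

import Mathlib

open MeasureTheory ProbabilityTheory

/-- The real value of the Riemann zeta function at a real argument. -/
noncomputable def zetaR (s : ℝ) : ℝ := (riemannZeta (s : ℂ)).re

/-- A real random variable `X` is strictly stable with parameters `(ν, θ, τ)` if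
`ν ≥ 1/4`, `|θ| ≤ min 1 (2√ν − 1)`, `P(X = 0) = 0`, `log |X|` has finite absolute
moments of every order, and the characteristic function of `X` is
`E[exp(i k X)] = exp(−exp(ν^{−1/2}(log|k| + τ − i(π/2)θ sign k) + C(ν^{−1/2} − 1)))`
for all real `k ≠ 0`, where `C` is the Euler–Mascheroni constant. -/
def IsStrictlyStable {Ω : Type*} [MeasureSpace Ω] (X : Ω → ℝ) (ν θ τ : ℝ) : Prop :=
  Measurable X ∧ (1/4 : ℝ) ≤ ν ∧ |θ| ≤ min 1 (2 * Real.sqrt ν - 1) ∧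
  (ℙ : Measure Ω) {ω | X ω = 0} = 0 ∧
  (∀ p : ℕ, Integrable (fun ω => (abs (Real.log (abs (X ω)))) ^ p)) ∧
  ∀ k : ℝ, k ≠ 0 →
    (∫ ω, Complex.exp (Complex.I * (k : ℂ) * (X ω : ℂ))) =
      Complex.exp (-Complex.exp
        (((ν ^ (-(1/2) : ℝ) : ℝ) : ℂ) *
            (((Real.log |k| : ℝ) : ℂ) + (τ : ℂ) -
              Complex.I * ((Real.pi / 2 : ℝ) : ℂ) * (θ : ℂ) * ((Real.sign k : ℝ) : ℂ)) +
          ((Real.eulerMascheroniConstant : ℝ) : ℂ) * (((ν ^ (-(1/2) : ℝ) : ℝ) : ℂ) - 1)))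

/-!
For `-1 < Re s < 0` the Mellin transform of `t ↦ exp (-c t) - 1` is `Γ(s) c ^ (-s)`: this holds for
`c > 0` by scaling, for `Re c > 0` by analytic continuation, and up to the imaginary axis by
continuity. Averaging the cases `c = ± i` writes `|x| ^ s`, for `0 < s < 1`, as an integral of
`cos (x k) - 1` against `k ^ (-s - 1)`; integrating over a strictly stable law and inserting its
characteristic function gives, for small `s > 0`,

  `E |X| ^ s * Γ(1 - s) cos (π s / 2) = Γ(1 - √ν s) exp ((τ + C (1 - √ν)) s) cos (π θ s / 2)`.

So on the right of `0` the function `log E |X| ^ s` agrees with a function analytic at `0`, whose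
Taylor coefficients come from `log Γ(1 + x) = -C x + ∑ n ≥ 2, (-1) ^ n ζ(n) x ^ n / n` and
`cos (π x / 2) = Γ(1 + x / 2) Γ(1 - x / 2) / (Γ(1 + x) Γ(1 - x))`. The moments of `log |X|` are the
right limits at `0` of the derivatives of `E |X| ^ s`, and the fifth one is the complete Bell
polynomial in the first five cumulants.
-/

open Set Filter Topology

/-! ### The Mellin transform of `exp (-c t) - 1` -/

section Mellin

lemma norm_cexp_neg_sub_one_le {z : ℂ} (hz : 0 ≤ z.re) :
    ‖Complex.exp (-z) - 1‖ ≤ 2 * min 1 ‖z‖ := by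
  rw [mul_min_of_nonneg _ _ zero_le_two, le_min_iff, mul_one]
  have hle_two : ‖Complex.exp (-z) - 1‖ ≤ 2 := by
    have hexp : ‖Complex.exp (-z)‖ ≤ 1 := by simpa [Complex.norm_exp] using hz
    linarith [norm_sub_le (Complex.exp (-z)) 1, norm_one (α := ℂ)]
  refine ⟨hle_two, ?_⟩
  rcases le_total ‖z‖ 1 with h | h
  · simpa using Complex.norm_exp_sub_one_le (x := -z) (by simpa using h)
  · linarith

lemma integrableOn_rpow_mul_min_one_mul {a M : ℝ} (ha : -1 < a) (ha₀ : a < 0) (hM : 0 ≤ M) :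
    IntegrableOn (fun t : ℝ ↦ t ^ (a - 1) * min 1 (M * t)) (Ioi 0) := by
  refine mellin_convergent_of_isBigO_scalar (a := 0) (b := -1)
    ((by fun_prop : Continuous fun t : ℝ ↦ min 1 (M * t)).locallyIntegrable.locallyIntegrableOn _)
    (.of_norm_eventuallyLE ?_) ha₀ (.of_bound M ?_) ha
  · filter_upwards [eventually_gt_atTop 0] with t ht
    have : 0 ≤ min 1 (M * t) := by positivity
    simp [abs_of_nonneg this]
  · filter_upwards [self_mem_nhdsWithin] with t (ht : 0 < t)
    have : 0 ≤ min 1 (M * t) := by positivity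
    simp [abs_of_nonneg this, abs_of_pos ht]

lemma norm_cpow_smul_cexp_neg_mul_sub_one_le {s c : ℂ} {M t : ℝ} (hc : 0 ≤ c.re) (hM : ‖c‖ ≤ M)
    (ht : 0 < t) :
    ‖(t : ℂ) ^ (s - 1) • (Complex.exp (-(c * t)) - 1)‖ ≤
      2 * (t ^ (s.re - 1) * min 1 (M * t)) := by
  rw [norm_smul, Complex.norm_cpow_eq_rpow_re_of_pos ht, Complex.sub_re, Complex.one_re,
    mul_left_comm]
  gcongr
  refine (norm_cexp_neg_sub_one_le (by simpa using mul_nonneg hc ht.le)).trans ?_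
  gcongr
  simpa [abs_of_pos ht] using mul_le_mul_of_nonneg_right hM ht.le

lemma aestronglyMeasurable_cpow_smul_cexp_neg_mul_sub_one (s c : ℂ) :
    AEStronglyMeasurable (fun t : ℝ ↦ (t : ℂ) ^ (s - 1) • (Complex.exp (-(c * t)) - 1))
      (volume.restrict (Ioi 0)) :=
  Measurable.aestronglyMeasurable (by fun_prop)

lemma mellinConvergent_cexp_neg_mul_sub_one {s c : ℂ} (hs : -1 < s.re) (hs₀ : s.re < 0)
    (hc : 0 ≤ c.re) :
    MellinConvergent (fun t : ℝ ↦ Complex.exp (-(c * t)) - 1) s :=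
  ((integrableOn_rpow_mul_min_one_mul hs hs₀ (norm_nonneg c)).const_mul 2).mono'
    (aestronglyMeasurable_cpow_smul_cexp_neg_mul_sub_one s c)
    (ae_restrict_of_forall_mem measurableSet_Ioi fun _ ht ↦
      norm_cpow_smul_cexp_neg_mul_sub_one_le hc le_rfl ht)

lemma continuousOn_mellin_cexp_neg_mul_sub_one {s : ℂ} (hs : -1 < s.re) (hs₀ : s.re < 0) :
    ContinuousOn (fun c : ℂ ↦ mellin (fun t : ℝ ↦ Complex.exp (-(c * t)) - 1) s)
      {c | 0 ≤ c.re} := by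
  intro c₀ _
  refine continuousWithinAt_of_dominated
    (bound := fun t ↦ 2 * (t ^ (s.re - 1) * min 1 ((‖c₀‖ + 1) * t)))
    (.of_forall fun c ↦ aestronglyMeasurable_cpow_smul_cexp_neg_mul_sub_one s c) ?_
    ((integrableOn_rpow_mul_min_one_mul hs hs₀ (by positivity)).const_mul 2)
    (.of_forall fun t ↦ by fun_prop)
  filter_upwards [self_mem_nhdsWithin, nhdsWithin_le_nhds (Metric.ball_mem_nhds c₀ one_pos)]
    with c hc hcc₀
  refine ae_restrict_of_forall_mem measurableSet_Ioi fun t ht ↦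
    norm_cpow_smul_cexp_neg_mul_sub_one_le hc ?_ ht
  linarith [norm_le_norm_add_norm_sub' c c₀, mem_ball_iff_norm.1 hcc₀]

lemma integrableOn_rpow_mul_exp_neg_mul {a r : ℝ} (ha : 0 < a) (hr : 0 < r) :
    IntegrableOn (fun t : ℝ ↦ t ^ (a - 1) * Real.exp (-(r * t))) (Ioi 0) := by
  refine .of_integral_ne_zero ?_
  rw [Real.integral_rpow_mul_exp_neg_mul_Ioi ha hr]
  have := Real.Gamma_pos_of_pos ha
  positivity

lemma differentiableAt_mellin_cexp_neg_mul_sub_one {s c₀ : ℂ} (hs : -1 < s.re) (hs₀ : s.re < 0)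
    (hc₀ : 0 < c₀.re) :
    DifferentiableAt ℂ (fun c : ℂ ↦ mellin (fun t : ℝ ↦ Complex.exp (-(c * t)) - 1) s) c₀ := by
  have hU : {c : ℂ | c₀.re / 2 < c.re} ∈ 𝓝 c₀ :=
    (isOpen_Ioi.preimage Complex.continuous_re).mem_nhds (by simpa using hc₀)
  refine (hasDerivAt_integral_of_dominated_loc_of_deriv_le
    (F' := fun c (t : ℝ) ↦ (t : ℂ) ^ (s - 1) • (Complex.exp (-(c * t)) * -(t : ℂ)))
    (bound := fun t ↦ t ^ (s.re + 1 - 1) * Real.exp (-(c₀.re / 2 * t))) hU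
    (.of_forall fun c ↦ aestronglyMeasurable_cpow_smul_cexp_neg_mul_sub_one s c)
    (mellinConvergent_cexp_neg_mul_sub_one hs hs₀ hc₀.le)
    (Measurable.aestronglyMeasurable (by fun_prop)) ?_
    (integrableOn_rpow_mul_exp_neg_mul (by linarith) (by linarith)) ?_).2.differentiableAt
  · refine ae_restrict_of_forall_mem measurableSet_Ioi fun t ht c hc ↦ ?_
    have ht : 0 < t := ht
    have hc : c₀.re / 2 < c.re := hc
    rw [norm_smul, Complex.norm_cpow_eq_rpow_re_of_pos ht, add_sub_right_comm,
      Real.rpow_add_one ht.ne', norm_mul, Complex.norm_exp, norm_neg, Complex.norm_of_nonneg ht.le,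
      Complex.sub_re, Complex.one_re, mul_assoc, mul_comm t]
    gcongr
    simpa using mul_le_mul_of_nonneg_right hc.le ht.le
  · refine .of_forall fun t c _ ↦ HasDerivAt.fun_const_smul _ (HasDerivAt.sub_const _ ?_)
    simpa using ((hasDerivAt_id c).mul_const (t : ℂ)).neg.cexp

lemma tendsto_cpow_mul_cexp_neg_sub_one {s : ℂ} {l : Filter ℝ} (hl : ∀ᶠ t in l, 0 < t)
    (h : Tendsto (fun t : ℝ ↦ min 1 t * t ^ s.re) l (𝓝 0)) :
    Tendsto (fun t : ℝ ↦ (t : ℂ) ^ s / s * (Complex.exp (-(t : ℂ)) - 1)) l (𝓝 0) := by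
  refine squeeze_zero_norm' (a := fun t ↦ 2 / ‖s‖ * (min 1 t * t ^ s.re)) ?_
    (by simpa using h.const_mul (2 / ‖s‖))
  filter_upwards [hl] with t ht
  have := norm_cexp_neg_sub_one_le (z := t) (by simpa using ht.le)
  rw [Complex.norm_of_nonneg ht.le] at this
  calc ‖(t : ℂ) ^ s / s * (Complex.exp (-(t : ℂ)) - 1)‖
      = t ^ s.re / ‖s‖ * ‖Complex.exp (-(t : ℂ)) - 1‖ := by
        rw [norm_mul, norm_div, Complex.norm_cpow_eq_rpow_re_of_pos ht]
    _ ≤ t ^ s.re / ‖s‖ * (2 * min 1 t) := by gcongr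
    _ = 2 / ‖s‖ * (min 1 t * t ^ s.re) := by ring

lemma tendsto_min_one_mul_rpow_nhdsGT_zero {a : ℝ} (ha : -1 < a) :
    Tendsto (fun t : ℝ ↦ min 1 t * t ^ a) (𝓝[>] 0) (𝓝 0) := by
  have h : Tendsto (fun t : ℝ ↦ t ^ (a + 1)) (𝓝[>] 0) (𝓝 0) := by
    simpa [Real.zero_rpow (by linarith : a + 1 ≠ 0)] using
      (Real.continuousAt_rpow_const 0 (a + 1) (.inr (by linarith))).tendsto.mono_left
        nhdsWithin_le_nhds
  refine h.congr' ?_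
  filter_upwards [Ioo_mem_nhdsGT one_pos] with t ht
  rw [min_eq_right ht.2.le, Real.rpow_add_one ht.1.ne', mul_comm]

lemma tendsto_min_one_mul_rpow_atTop {a : ℝ} (ha : a < 0) :
    Tendsto (fun t : ℝ ↦ min 1 t * t ^ a) atTop (𝓝 0) := by
  refine (neg_neg a ▸ tendsto_rpow_neg_atTop (neg_pos.2 ha)).congr' ?_
  filter_upwards [eventually_ge_atTop 1] with t ht
  rw [min_eq_left ht, one_mul]

lemma hasMellin_cexp_neg {s : ℂ} (hs : 0 < s.re) :
    HasMellin (fun t : ℝ ↦ Complex.exp (-(t : ℂ))) s (Complex.Gamma s) := by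
  have h := Complex.GammaIntegral_convergent hs
  have h_eq := Complex.Gamma_eq_integral hs
  simp only [Complex.GammaIntegral, Complex.ofReal_exp, Complex.ofReal_neg] at h h_eq
  simpa [HasMellin, MellinConvergent, mellin, h_eq, mul_comm] using h

lemma mellin_cexp_neg_sub_one {s : ℂ} (hs : -1 < s.re) (hs₀ : s.re < 0) :
    mellin (fun t : ℝ ↦ Complex.exp (-(t : ℂ)) - 1) s = Complex.Gamma s := by
  have hs_ne : s ≠ 0 := by rintro rfl; simp at hs₀
  obtain ⟨hΓ_int, hΓ⟩ := hasMellin_cexp_neg (s := s + 1) (by simp; linarith)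
  have hu'v := mellinConvergent_cexp_neg_mul_sub_one (c := 1) hs hs₀ (by simp)
  simp only [MellinConvergent, mellin, add_sub_cancel_right, smul_eq_mul, one_mul]
    at hΓ_int hΓ hu'v ⊢
  have huv' (t : ℝ) : (t : ℂ) ^ s / s * -Complex.exp (-(t : ℂ)) =
      -((t : ℂ) ^ s * Complex.exp (-(t : ℂ)) / s) := by ring
  have hparts := integral_Ioi_mul_deriv_eq_deriv_mul (u := fun t : ℝ ↦ (t : ℂ) ^ s / s)
    (v := fun t : ℝ ↦ Complex.exp (-(t : ℂ)) - 1) (v' := fun t ↦ -Complex.exp (-(t : ℂ)))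
    (fun t ht ↦ by
      simpa using hasDerivAt_ofReal_cpow_const' (r := s - 1) (ne_of_gt ht) (by simpa using hs_ne))
    (fun t _ ↦ by simpa using (hasDerivAt_id t).ofReal_comp.neg.cexp.sub_const 1)
    ((hΓ_int.div_const s).neg.congr (.of_forall fun t ↦ (huv' t).symm)) hu'v
    (tendsto_cpow_mul_cexp_neg_sub_one self_mem_nhdsWithin
      (tendsto_min_one_mul_rpow_nhdsGT_zero hs))
    (tendsto_cpow_mul_cexp_neg_sub_one (eventually_gt_atTop 0)
      (tendsto_min_one_mul_rpow_atTop hs₀))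
  simp_rw [huv', integral_neg, integral_div, hΓ, Complex.Gamma_add_one s hs_ne,
    mul_div_cancel_left₀ _ hs_ne] at hparts
  linear_combination hparts

lemma mellin_cexp_neg_mul_sub_one_of_pos {s : ℂ} (hs : -1 < s.re) (hs₀ : s.re < 0) {r : ℝ}
    (hr : 0 < r) :
    mellin (fun t : ℝ ↦ Complex.exp (-(r * t)) - 1) s = Complex.Gamma s * (r : ℂ) ^ (-s) := by
  have := mellin_comp_mul_left (fun t : ℝ ↦ Complex.exp (-(t : ℂ)) - 1) s hr
  simpa [mellin_cexp_neg_sub_one hs hs₀, mul_comm] using this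

lemma mellin_cexp_neg_mul_sub_one_of_re_pos {s c : ℂ} (hs : -1 < s.re) (hs₀ : s.re < 0)
    (hc : 0 < c.re) :
    mellin (fun t : ℝ ↦ Complex.exp (-(c * t)) - 1) s = Complex.Gamma s * c ^ (-s) := by
  -- Both sides are holomorphic in the right half-plane and agree on the real half-line `(1, ∞)`,
  -- which accumulates at `1`.
  have hU : IsOpen {c : ℂ | 0 < c.re} := isOpen_Ioi.preimage Complex.continuous_re
  refine AnalyticOnNhd.eqOn_of_preconnected_of_mem_closure (z₀ := 1)
    (f := fun c ↦ mellin (fun t : ℝ ↦ Complex.exp (-(c * t)) - 1) s)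
    (g := fun c ↦ Complex.Gamma s * c ^ (-s))
    (DifferentiableOn.analyticOnNhd (fun c hc ↦
      (differentiableAt_mellin_cexp_neg_mul_sub_one hs hs₀ hc).differentiableWithinAt) hU)
    (DifferentiableOn.analyticOnNhd (fun c hc ↦ ?_) hU)
    (convex_halfSpace_re_gt 0).isPreconnected (show 0 < (1 : ℂ).re by simp) ?_ hc
  · have : c ∈ Complex.slitPlane := .inl hc
    exact DifferentiableAt.differentiableWithinAt (by fun_prop (disch := assumption))
  · refine closure_mono (s := image (↑) (Ioi (1 : ℝ))) ?_ ?_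
    · rintro _ ⟨r, hr : 1 < r, rfl⟩
      exact ⟨mellin_cexp_neg_mul_sub_one_of_pos hs hs₀ (one_pos.trans hr), by simpa using hr.ne'⟩
    · exact_mod_cast mem_closure_image Complex.continuous_ofReal.continuousAt
        (closure_Ioi (1 : ℝ) ▸ self_mem_Ici)

lemma hasMellin_cexp_neg_mul_sub_one {s c : ℂ} (hs : -1 < s.re) (hs₀ : s.re < 0)
    (hc : 0 ≤ c.re) (hc₀ : c ≠ 0) :
    HasMellin (fun t : ℝ ↦ Complex.exp (-(c * t)) - 1) s (Complex.Gamma s * c ^ (-s)) := by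
  refine ⟨mellinConvergent_cexp_neg_mul_sub_one hs hs₀ hc, ?_⟩
  have hslit : ∀ z : ℂ, 0 ≤ z.re ∧ z ≠ 0 → z ∈ Complex.slitPlane := fun z hz ↦
    hz.1.eq_or_lt.elim (fun h ↦ .inr fun him ↦ hz.2 (Complex.ext h.symm him)) .inl
  refine Set.EqOn.of_subset_closure (s := {z : ℂ | 0 < z.re}) (t := {z : ℂ | 0 ≤ z.re ∧ z ≠ 0})
    (f := fun c ↦ mellin (fun t : ℝ ↦ Complex.exp (-(c * t)) - 1) s)
    (g := fun c ↦ Complex.Gamma s * c ^ (-s))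
    (fun z hz ↦ mellin_cexp_neg_mul_sub_one_of_re_pos hs hs₀ hz)
    ((continuousOn_mellin_cexp_neg_mul_sub_one hs hs₀).mono fun z hz ↦ hz.1)
    (fun z hz ↦ ?_) (fun z hz ↦ ⟨le_of_lt hz, ?_⟩) (fun z hz ↦ ?_) ⟨hc, hc₀⟩
  · have := hslit z hz
    exact ContinuousAt.continuousWithinAt (by fun_prop (disch := assumption))
  · rintro rfl
    exact lt_irrefl (0 : ℝ) hz
  · rw [Complex.closure_setOfPred_lt_re]
    exact hz.1

lemma hasMellin_cexp_neg_mul_rpow_sub_one {s c : ℂ} {α : ℝ} (hα : 0 < α) (hs : -α < s.re)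
    (hs₀ : s.re < 0) (hc : 0 ≤ c.re) (hc₀ : c ≠ 0) :
    HasMellin (fun t : ℝ ↦ Complex.exp (-(c * (t ^ α : ℝ))) - 1) s
      (α⁻¹ * (Complex.Gamma (s / α) * c ^ (-(s / α)))) := by
  have hre : (s / α).re = s.re / α := Complex.div_ofReal_re s α
  obtain ⟨hconv, hval⟩ := hasMellin_cexp_neg_mul_sub_one (s := s / α)
    (by rwa [hre, lt_div_iff₀ hα, neg_one_mul]) (by rw [hre]; exact div_neg_of_neg_of_pos hs₀ hα)
    hc hc₀
  refine ⟨(MellinConvergent.comp_rpow hα.ne').2 hconv, ?_⟩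
  rw [mellin_comp_rpow (fun t : ℝ ↦ Complex.exp (-(c * t)) - 1), hval, abs_of_pos hα,
    Complex.real_smul, Complex.ofReal_inv]

lemma hasMellin_cos_sub_one {s : ℂ} (hs : -1 < s.re) (hs₀ : s.re < 0) :
    HasMellin (fun t : ℝ ↦ Complex.cos t - 1) s
      (Complex.Gamma s * Complex.cos (Real.pi * s / 2)) := by
  obtain ⟨hconv, hval⟩ := hasMellin_cexp_neg_mul_sub_one (c := Complex.I) hs hs₀ (by simp) (by simp)
  obtain ⟨hconv', hval'⟩ :=
    hasMellin_cexp_neg_mul_sub_one (c := -Complex.I) hs hs₀ (by simp) (by simp)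
  have hadd := hasMellin_add hconv hconv'
  have h := hasMellin_const_smul hadd.1 (1 / 2 : ℂ)
  rw [hadd.2, hval, hval'] at h
  convert h using 1
  · ext t
    rw [smul_eq_mul, Complex.cos]
    ring_nf
  · rw [Complex.cpow_def_of_ne_zero (by simp), Complex.cpow_def_of_ne_zero (by simp),
      Complex.log_I, Complex.log_neg_I, Complex.cos, smul_eq_mul]
    ring_nf

lemma hasMellin_cos_mul_sub_one {s : ℂ} (hs : -1 < s.re) (hs₀ : s.re < 0) {x : ℝ}
    (hx : x ≠ 0) :
    HasMellin (fun t : ℝ ↦ Complex.cos (x * t) - 1) s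
      (|x| ^ (-s) * (Complex.Gamma s * Complex.cos (Real.pi * s / 2))) := by
  obtain ⟨hconv, hval⟩ := hasMellin_cos_sub_one hs hs₀
  have hx' := abs_pos.2 hx
  have hcos : (fun t : ℝ ↦ Complex.cos (x * t) - 1) =
      fun t ↦ (fun u : ℝ ↦ Complex.cos u - 1) (|x| * t) := by
    ext t
    rcases abs_choice x with h | h <;> simp [h]
  rw [hcos, ← hval, ← smul_eq_mul]
  exact ⟨(MellinConvergent.comp_mul_left hx').2 hconv,
    mellin_comp_mul_left (fun u : ℝ ↦ Complex.cos u - 1) s hx'⟩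

lemma re_cpow_smul_eqOn (f : ℝ → ℂ) (a : ℝ) :
    EqOn (fun t : ℝ ↦ RCLike.re ((t : ℂ) ^ ((a : ℂ) - 1) • f t))
      (fun t ↦ t ^ (a - 1) * (f t).re) (Ioi 0) := fun t ht ↦ by
  have : (t : ℂ) ^ ((a : ℂ) - 1) = (t ^ (a - 1) : ℝ) := by
    simp [Complex.ofReal_cpow (le_of_lt ht)]
  simp [this]

lemma integrableOn_rpow_mul_re_of_mellinConvergent {f : ℝ → ℂ} {a : ℝ}
    (h : MellinConvergent f a) : IntegrableOn (fun t ↦ t ^ (a - 1) * (f t).re) (Ioi 0) :=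
  (integrableOn_congr_fun (re_cpow_smul_eqOn f a) measurableSet_Ioi).1 h.re

lemma integral_rpow_mul_re_of_mellinConvergent {f : ℝ → ℂ} {a : ℝ} (h : MellinConvergent f a) :
    ∫ t in Ioi 0, t ^ (a - 1) * (f t).re = (mellin f a).re := by
  rw [← setIntegral_congr_fun measurableSet_Ioi (re_cpow_smul_eqOn f a), integral_re h]
  rfl

lemma integral_rpow_mul_cos_mul_sub_one {p : ℝ} (hp : 0 < p) (hp₁ : p < 1) (x : ℝ) :
    ∫ t in Ioi (0 : ℝ), t ^ (-p - 1) * (Real.cos (x * t) - 1) =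
      |x| ^ p * (Real.Gamma (-p) * Real.cos (Real.pi * p / 2)) := by
  rcases eq_or_ne x 0 with rfl | hx
  · simp [Real.zero_rpow hp.ne']
  obtain ⟨hconv, hval⟩ := hasMellin_cos_mul_sub_one (s := (-p : ℝ)) (by simpa) (by simpa) hx
  have hre := integral_rpow_mul_re_of_mellinConvergent hconv
  have hval' : ((|x| : ℝ) : ℂ) ^ (-((-p : ℝ) : ℂ)) * (Complex.Gamma (-p : ℝ) *
        Complex.cos (Real.pi * (-p : ℝ) / 2)) =
      (|x| ^ p * (Real.Gamma (-p) * Real.cos (Real.pi * p / 2)) : ℝ) := by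
    push_cast [Complex.ofReal_cpow (abs_nonneg x), ← Complex.Gamma_ofReal]
    simp [neg_div]
  rw [hval, hval', Complex.ofReal_re] at hre
  rw [← hre]
  congr! 4 with t
  simp [← Complex.ofReal_mul, Complex.cos_ofReal_re]

end Mellin

/-! ### Fractional absolute moments from the characteristic function -/

section CharFun

variable {μ : Measure ℝ} [IsProbabilityMeasure μ] {p : ℝ}

lemma integrable_cos_mul (k : ℝ) : Integrable (fun x ↦ Real.cos (x * k)) μ :=
  .of_bound (C := 1) (Continuous.aestronglyMeasurable (by fun_prop))
    (.of_forall fun _ ↦ Real.abs_cos_le_one _)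

lemma integral_cos_mul_sub_one (k : ℝ) :
    ∫ x, (Real.cos (x * k) - 1) ∂μ = (charFun μ k).re - 1 := by
  have hexp : Integrable (fun x : ℝ ↦ Complex.exp (k * x * Complex.I)) μ :=
    .of_bound (C := 1) (Continuous.aestronglyMeasurable (by fun_prop)) (.of_forall fun x ↦ by
      simp [← Complex.ofReal_mul, Complex.norm_exp_ofReal_mul_I])
  rw [integral_sub (integrable_cos_mul k) (integrable_const 1), charFun_apply_real]
  change _ = RCLike.re (∫ x : ℝ, Complex.exp (k * x * Complex.I) ∂μ) - 1
  rw [← integral_re hexp]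
  have hre (x : ℝ) : RCLike.re (Complex.exp (k * x * Complex.I)) = Real.cos (x * k) := by
    rw [← Complex.ofReal_mul, mul_comm x]
    exact Complex.exp_ofReal_mul_I_re _
  simp [hre]

lemma integrable_prod_rpow_mul_cos_mul_sub_one
    (hint : IntegrableOn (fun k ↦ k ^ (-p - 1) * ((charFun μ k).re - 1)) (Ioi 0)) :
    Integrable (fun z : ℝ × ℝ ↦ z.2 ^ (-p - 1) * (Real.cos (z.1 * z.2) - 1))
      (μ.prod (volume.restrict (Ioi 0))) := by
  refine (integrable_prod_iff' (Measurable.aestronglyMeasurable (by fun_prop))).2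
    ⟨.of_forall fun k ↦
      ((integrable_cos_mul k).sub (integrable_const 1)).const_mul (k ^ (-p - 1)), ?_⟩
  refine hint.neg.congr (ae_restrict_of_forall_mem measurableSet_Ioi fun k hk ↦ ?_)
  have hk : 0 < k := hk
  have hnorm (x : ℝ) : ‖k ^ (-p - 1) * (Real.cos (x * k) - 1)‖ =
      -(k ^ (-p - 1) * (Real.cos (x * k) - 1)) :=
    Real.norm_of_nonpos (mul_nonpos_of_nonneg_of_nonpos (by positivity)
      (sub_nonpos.2 (Real.cos_le_one _)))
  simp [hnorm, integral_neg, integral_const_mul, integral_cos_mul_sub_one]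

lemma integral_abs_rpow_mul_eq_integral_charFun (hp : 0 < p) (hp₁ : p < 1)
    (hint : IntegrableOn (fun k ↦ k ^ (-p - 1) * ((charFun μ k).re - 1)) (Ioi 0)) :
    (∫ x, |x| ^ p ∂μ) * (Real.Gamma (-p) * Real.cos (Real.pi * p / 2)) =
      ∫ k in Ioi 0, k ^ (-p - 1) * ((charFun μ k).re - 1) := by
  simp_rw [← integral_mul_const, ← integral_rpow_mul_cos_mul_sub_one hp hp₁]
  rw [integral_integral_swap (integrable_prod_rpow_mul_cos_mul_sub_one hint)]
  simp_rw [integral_const_mul, integral_cos_mul_sub_one]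

lemma integral_abs_rpow_mul_of_charFun_eq {α : ℝ} {c : ℂ} (hα : 0 < α) (hp : 0 < p)
    (hp₁ : p < 1) (hpα : p < α) (hc : 0 ≤ c.re) (hc₀ : c ≠ 0)
    (hμ : ∀ k : ℝ, 0 < k → charFun μ k = Complex.exp (-(c * (k ^ α : ℝ)))) :
    (∫ x, |x| ^ p ∂μ) * (Real.Gamma (1 - p) * Real.cos (Real.pi * p / 2)) =
      Real.Gamma (1 - p / α) * (c ^ ((p / α : ℝ) : ℂ)).re := by
  have hΓ {y : ℝ} (hy : 0 < y) : Real.Gamma (1 - y) = -y * Real.Gamma (-y) := by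
    rw [← Real.Gamma_add_one (neg_ne_zero.2 hy.ne'), neg_add_eq_sub]
  obtain ⟨hconv, hval⟩ := hasMellin_cexp_neg_mul_rpow_sub_one (s := (-p : ℝ)) hα (by simpa)
    (by simpa) hc hc₀
  have heq : EqOn (fun k : ℝ ↦ k ^ (-p - 1) * (Complex.exp (-(c * (k ^ α : ℝ))) - 1).re)
      (fun k ↦ k ^ (-p - 1) * ((charFun μ k).re - 1)) (Ioi 0) := fun k hk ↦ by simp [hμ k hk]
  have hdiv : ((-p : ℝ) / α : ℂ) = (-(p / α) : ℝ) := by push_cast; ring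
  have hmoment := integral_abs_rpow_mul_eq_integral_charFun hp hp₁
    ((integrableOn_congr_fun heq measurableSet_Ioi).1
      (integrableOn_rpow_mul_re_of_mellinConvergent hconv))
  rw [← setIntegral_congr_fun measurableSet_Ioi heq,
    integral_rpow_mul_re_of_mellinConvergent hconv, hval, hdiv, Complex.Gamma_ofReal,
    Complex.re_ofReal_mul, Complex.re_ofReal_mul] at hmoment
  rw [hΓ hp, hΓ (div_pos hp hα), mul_assoc, mul_left_comm, hmoment, ← Complex.ofReal_neg, neg_neg]
  ring

end CharFun

/-! ### Power series of `log Γ(1 + x)` and `log cos (π x / 2)` -/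

section LogGamma

variable {x : ℝ}

lemma hasSum_one_div_add_one_pow_zetaR {k : ℕ} (hk : 1 < k) :
    HasSum (fun n : ℕ ↦ 1 / (n + 1 : ℝ) ^ k) (zetaR k) := by
  have hzeta : ∑' n : ℕ, 1 / (n : ℝ) ^ k = zetaR k := by
    rw [zetaR, Complex.ofReal_natCast, zeta_nat_eq_tsum_of_gt_one hk,
      ← Complex.ofReal_re (∑' n : ℕ, 1 / (n : ℝ) ^ k)]
    push_cast
    rfl
  have hsum := (Real.summable_one_div_nat_pow.2 hk).hasSum
  rw [hzeta] at hsum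
  simpa [(zero_lt_one.trans hk).ne'] using (hasSum_nat_add_iff' 1).2 hsum

lemma zetaR_two : zetaR 2 = Real.pi ^ 2 / 6 := by
  simp [zetaR, riemannZeta_two, ← Complex.ofReal_pow]

lemma zetaR_four : zetaR 4 = Real.pi ^ 4 / 90 := by
  simp [zetaR, riemannZeta_four, ← Complex.ofReal_pow]

lemma hasSum_sub_log_one_add (hx : |x| < 1) :
    HasSum (fun k : ℕ ↦ (-x) ^ (k + 2) / (k + 2)) (x - Real.log (1 + x)) := by
  have hlog := (hasSum_nat_add_iff' 1).2
    (Real.hasSum_pow_div_log_of_abs_lt_one (x := -x) (by simpa))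
  rw [Finset.sum_range_one, zero_add, pow_one, Nat.cast_zero, zero_add, div_one, sub_neg_eq_add,
    sub_neg_eq_add, neg_add_eq_sub] at hlog
  refine hlog.congr_fun fun k ↦ ?_
  push_cast
  ring

lemma summable_neg_div_pow_div (hx : |x| < 1) :
    Summable fun z : ℕ × ℕ ↦ (-(x / (z.1 + 1))) ^ (z.2 + 2) / (z.2 + 2 : ℝ) := by
  have hsq : Summable fun n : ℕ ↦ 1 / (n + 1 : ℝ) ^ 2 :=
    (hasSum_one_div_add_one_pow_zetaR one_lt_two).summable
  refine .of_norm_bounded (hsq.mul_of_nonneg (summable_geometric_of_lt_one (abs_nonneg x) hx)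
    (fun n ↦ by positivity) fun k ↦ by positivity) fun ⟨n, k⟩ ↦ ?_
  have hn : (1 : ℝ) ≤ n + 1 := by linarith [n.cast_nonneg (α := ℝ)]
  calc ‖(-(x / (n + 1))) ^ (k + 2) / (k + 2 : ℝ)‖
      = |x| ^ k * |x| ^ 2 / (n + 1) ^ (k + 2) / (k + 2) := by
        rw [norm_div, norm_pow, norm_neg, norm_div, div_pow, ← pow_add,
          Real.norm_of_nonneg (by positivity : (0 : ℝ) ≤ n + 1),
          Real.norm_of_nonneg (by positivity : (0 : ℝ) ≤ k + 2), Real.norm_eq_abs]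
    _ ≤ |x| ^ k * 1 / (n + 1) ^ 2 / 1 := by
        gcongr
        · exact pow_le_one₀ (abs_nonneg x) hx.le
        · omega
        · linarith [k.cast_nonneg (α := ℝ)]
    _ = 1 / (n + 1) ^ 2 * |x| ^ k := by ring

lemma tendsto_sum_range_div_sub_log_add (hx : -1 < x) :
    Tendsto (fun N : ℕ ↦ ∑ n ∈ Finset.range N, (x / (n + 1) - Real.log (1 + x / (n + 1)))) atTop
      (𝓝 (Real.log (Real.Gamma (1 + x)) + Real.eulerMascheroniConstant * x)) := by
  refine (tendsto_add_atTop_iff_nat 1).1 ?_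
  have hlim := ((Real.BohrMollerup.tendsto_log_gamma (by linarith : 0 < 1 + x)).add
    ((Real.tendsto_harmonic_sub_log.comp (tendsto_add_atTop_nat 1)).mul_const x)).add
    (Real.tendsto_log_nat_add_one_sub_log.const_mul (1 + x))
  rw [mul_zero, add_zero] at hlim
  refine hlim.congr fun N ↦ ?_
  have hharm : ∑ n ∈ Finset.range (N + 1), x / (n + 1 : ℝ) = x * (harmonic (N + 1) : ℝ) := by
    simp [harmonic, Finset.mul_sum, div_eq_mul_inv]
  have hfact : ∑ n ∈ Finset.range (N + 1), Real.log (n + 1 : ℝ) =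
      Real.log N.factorial + Real.log (N + 1 : ℝ) := by
    rw [← Real.log_prod fun n _ ↦ by positivity, ← Real.log_mul (by positivity) (by positivity),
      mul_comm]
    exact_mod_cast congrArg Real.log (congrArg (Nat.cast (R := ℝ))
      (Finset.prod_range_add_one_eq_factorial (N + 1)))
  have hlog (n : ℕ) :
      Real.log (1 + x / (n + 1)) = Real.log (1 + x + n) - Real.log (n + 1 : ℝ) := by
    rw [← Real.log_div (by linarith [n.cast_nonneg (α := ℝ)]) (by positivity)]
    congr 1
    field_simp
    ring
  simp_rw [Function.comp, Real.BohrMollerup.logGammaSeq, hlog, Finset.sum_sub_distrib, hharm,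
    hfact]
  push_cast
  ring

/-- The Taylor coefficients at `0` of `x ↦ log Γ(1 + x)`. -/
noncomputable def logGammaCoeff : ℕ → ℝ
  | 0 => 0
  | 1 => -Real.eulerMascheroniConstant
  | n + 2 => (-1) ^ n * zetaR (n + 2 : ℕ) / (n + 2)

lemma hasSum_zetaR_mul_pow_log_Gamma (hx : |x| < 1) :
    HasSum (fun k : ℕ ↦ (-1) ^ k * zetaR (k + 2 : ℕ) / (k + 2) * x ^ (k + 2))
      (Real.log (Real.Gamma (1 + x)) + Real.eulerMascheroniConstant * x) := by
  have hprod := (summable_neg_div_pow_div hx).hasSum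
  have hlog (n : ℕ) : HasSum (fun k : ℕ ↦ (-(x / (n + 1))) ^ (k + 2) / (k + 2 : ℝ))
      (x / (n + 1) - Real.log (1 + x / (n + 1))) := by
    refine hasSum_sub_log_one_add ?_
    rw [abs_div, abs_of_pos (by positivity : (0 : ℝ) < n + 1), div_lt_one (by positivity)]
    linarith [n.cast_nonneg (α := ℝ)]
  have hzeta (k : ℕ) : HasSum (fun n : ℕ ↦ (-(x / (n + 1))) ^ (k + 2) / (k + 2 : ℝ))
      ((-1) ^ k * zetaR (k + 2 : ℕ) / (k + 2) * x ^ (k + 2)) := by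
    rw [div_mul_eq_mul_div, mul_right_comm, mul_div_right_comm]
    refine ((hasSum_one_div_add_one_pow_zetaR (by omega)).mul_left _).congr_fun fun n ↦ ?_
    rw [neg_pow, pow_add (-1), div_pow]
    ring
  have hsum := tendsto_nhds_unique (hprod.prod_fiberwise hlog).tendsto_sum_nat
    (tendsto_sum_range_div_sub_log_add (neg_lt_of_abs_lt hx))
  exact hsum ▸ ((Equiv.prodComm ℕ ℕ).hasSum_iff.2 hprod).prod_fiberwise hzeta

theorem hasSum_logGammaCoeff_mul_pow (hx : |x| < 1) :
    HasSum (fun n ↦ logGammaCoeff n * x ^ n) (Real.log (Real.Gamma (1 + x))) := by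
  refine (hasSum_nat_add_iff' 2).1 ?_
  simpa [Finset.sum_range_succ, logGammaCoeff] using hasSum_zetaR_mul_pow_log_Gamma hx

lemma Gamma_one_add_mul_Gamma_one_sub (hx : x ≠ 0) :
    Real.Gamma (1 + x) * Real.Gamma (1 - x) = Real.pi * x / Real.sin (Real.pi * x) := by
  rw [add_comm, Real.Gamma_add_one hx, mul_assoc, Real.Gamma_mul_Gamma_one_sub]
  ring

lemma cos_pi_mul_div_two_mul_Gamma (hx : |x| < 1) :
    Real.cos (Real.pi * x / 2) * (Real.Gamma (1 + x) * Real.Gamma (1 - x)) =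
      Real.Gamma (1 + x / 2) * Real.Gamma (1 - x / 2) := by
  obtain rfl | hx₀ := eq_or_ne x 0
  · simp
  have hsin {y : ℝ} (hy : |y| < 1) (hy₀ : y ≠ 0) : Real.sin (Real.pi * y) ≠ 0 := by
    obtain ⟨hy₁, hy₂⟩ := abs_lt.1 hy
    refine fun h ↦ mul_ne_zero Real.pi_ne_zero hy₀
      ((Real.sin_eq_zero_iff_of_lt_of_lt ?_ ?_).1 h) <;> nlinarith [Real.pi_pos]
  have hdouble : Real.sin (Real.pi * x) =
      2 * Real.sin (Real.pi * (x / 2)) * Real.cos (Real.pi * (x / 2)) := by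
    rw [← Real.sin_two_mul]
    ring_nf
  have hsin₁ := hsin hx hx₀
  have hsin₂ := hsin (y := x / 2) (by rw [abs_div, abs_two]; linarith [abs_nonneg x]) (by simpa)
  rw [Gamma_one_add_mul_Gamma_one_sub hx₀, Gamma_one_add_mul_Gamma_one_sub (by simpa),
    mul_div_assoc Real.pi x 2, mul_div_assoc', div_eq_div_iff hsin₁ hsin₂, hdouble]
  ring

lemma cos_pi_mul_div_two_pos (hx : |x| < 1) : 0 < Real.cos (Real.pi * x / 2) := by
  obtain ⟨hx₁, hx₂⟩ := abs_lt.1 hx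
  exact Real.cos_pos_of_mem_Ioo ⟨by nlinarith [Real.pi_pos], by nlinarith [Real.pi_pos]⟩

lemma log_cos_pi_mul_div_two (hx : |x| < 1) :
    Real.log (Real.cos (Real.pi * x / 2)) =
      Real.log (Real.Gamma (1 + x / 2)) + Real.log (Real.Gamma (1 - x / 2)) -
        (Real.log (Real.Gamma (1 + x)) + Real.log (Real.Gamma (1 - x))) := by
  have hΓ {y : ℝ} (hy : 0 < y) : Real.Gamma y ≠ 0 := (Real.Gamma_pos_of_pos hy).ne'
  obtain ⟨hx₁, hx₂⟩ := abs_lt.1 hx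
  have hΓ₁ := hΓ (by linarith : 0 < 1 + x)
  have hΓ₂ := hΓ (by linarith : 0 < 1 - x)
  rw [eq_sub_iff_add_eq, ← Real.log_mul hΓ₁ hΓ₂,
    ← Real.log_mul (cos_pi_mul_div_two_pos hx).ne' (mul_ne_zero hΓ₁ hΓ₂),
    cos_pi_mul_div_two_mul_Gamma hx, Real.log_mul (hΓ (by linarith)) (hΓ (by linarith))]

/-- The Taylor coefficients at `0` of `x ↦ log cos (π x / 2)`, with the Bernoulli numbers expressed
through zeta values. -/
noncomputable def logCosCoeff (n : ℕ) : ℝ :=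
  (1 + (-1) ^ n) * ((1 / 2) ^ n - 1) * logGammaCoeff n

theorem hasSum_logCosCoeff_mul_pow (hx : |x| < 1) :
    HasSum (fun n ↦ logCosCoeff n * x ^ n)
      (Real.log (Real.cos (Real.pi * x / 2))) := by
  have hx₂ : |x / 2| < 1 := by rw [abs_div, abs_two]; linarith [abs_nonneg x]
  have hΓ {y : ℝ} (hy : |y| < 1) := hasSum_logGammaCoeff_mul_pow hy
  rw [log_cos_pi_mul_div_two hx, sub_eq_add_neg 1 x, sub_eq_add_neg 1 (x / 2)]
  refine (((hΓ hx₂).add (hΓ (by rwa [abs_neg]))).sub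
    ((hΓ hx).add (hΓ (by rwa [abs_neg])))).congr_fun fun n ↦ ?_
  rw [logCosCoeff, neg_pow x, neg_pow (x / 2), div_pow, div_pow]
  ring

end LogGamma

/-! ### Moments from an analytic extension of the moment generating function -/

section Cumulants

lemma hasFPowerSeriesAt_ofScalars_iff_hasSum {f : ℝ → ℝ} {a : ℕ → ℝ} :
    HasFPowerSeriesAt f (.ofScalars ℝ a) 0 ↔ ∀ᶠ x in 𝓝 0, HasSum (fun n ↦ a n * x ^ n) (f x) := by
  simp [hasFPowerSeriesAt_iff, mul_comm]

lemma iteratedDeriv_eq_of_hasFPowerSeriesAt_ofScalars {f : ℝ → ℝ} {a : ℕ → ℝ} {x : ℝ}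
    (hf : HasFPowerSeriesAt f (.ofScalars ℝ a) x) (n : ℕ) :
    iteratedDeriv n f x = n.factorial * a n := by
  have h := hf.eq_formalMultilinearSeries hf.analyticAt.hasFPowerSeriesAt
  have hn := congrArg (fun p ↦ p.coeff n) h
  simp only [FormalMultilinearSeries.coeff_ofScalars] at hn
  rw [hn, mul_div_cancel₀ _ (by positivity)]

lemma iteratedDeriv_succ_exp_comp {L : ℝ → ℝ} {x : ℝ} (hL : AnalyticAt ℝ L x) (n : ℕ) :
    iteratedDeriv (n + 1) (fun s ↦ Real.exp (L s)) x =
      ∑ i ∈ Finset.range (n + 1), n.choose i * iteratedDeriv (i + 1) L x *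
        iteratedDeriv (n - i) (fun s ↦ Real.exp (L s)) x := by
  have hderiv : deriv (fun s ↦ Real.exp (L s)) =ᶠ[𝓝 x] fun s ↦ deriv L s * Real.exp (L s) := by
    filter_upwards [hL.eventually_analyticAt] with s hs
    rw [deriv_exp hs.differentiableAt, mul_comm]
  have hexp : AnalyticAt ℝ (fun s ↦ Real.exp (L s)) x := hL.rexp
  rw [iteratedDeriv_succ', hderiv.iteratedDeriv_eq,
    iteratedDeriv_fun_mul hL.deriv.contDiffAt hexp.contDiffAt]
  simp_rw [iteratedDeriv_succ']

lemma iteratedDeriv_five_exp_comp {L : ℝ → ℝ} {x : ℝ} (hL : AnalyticAt ℝ L x) (hLx : L x = 0) :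
    iteratedDeriv 5 (fun s ↦ Real.exp (L s)) x =
      iteratedDeriv 1 L x ^ 5 + 10 * iteratedDeriv 1 L x ^ 3 * iteratedDeriv 2 L x +
        10 * iteratedDeriv 1 L x ^ 2 * iteratedDeriv 3 L x +
        15 * iteratedDeriv 1 L x * iteratedDeriv 2 L x ^ 2 +
        5 * iteratedDeriv 1 L x * iteratedDeriv 4 L x +
        10 * iteratedDeriv 2 L x * iteratedDeriv 3 L x + iteratedDeriv 5 L x := by
  have hzero : iteratedDeriv 0 (fun s ↦ Real.exp (L s)) x = 1 := by simp [hLx]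
  have hsucc := iteratedDeriv_succ_exp_comp hL
  have h₁ := hsucc 0
  have h₂ := hsucc 1
  have h₃ := hsucc 2
  have h₄ := hsucc 3
  have h₅ := hsucc 4
  simp only [Finset.sum_range_succ, Finset.sum_range_zero, Nat.choose, Nat.sub_self, Nat.sub_zero,
    Nat.reduceAdd, Nat.reduceSub, Nat.cast_ofNat, Nat.cast_one, hzero] at h₁ h₂ h₃ h₄ h₅
  rw [h₅, h₄, h₃, h₂, h₁]
  ring

variable {Ω : Type*} [MeasurableSpace Ω] {μ : Measure Ω} {Y : Ω → ℝ}

lemma exp_mul_le_exp_mul_add_one {s t y : ℝ} (hs : 0 ≤ s) (hst : s ≤ t) :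
    Real.exp (s * y) ≤ Real.exp (t * y) + 1 := by
  rcases le_total 0 y with hy | hy
  · exact (Real.exp_le_exp.2 (mul_le_mul_of_nonneg_right hst hy)).trans (by simp)
  · exact (Real.exp_le_one_iff.2 (mul_nonpos_of_nonneg_of_nonpos hs hy)).trans
      (by simp [Real.exp_nonneg])

lemma tendsto_iteratedDeriv_mgf_nhdsGT_zero {n : ℕ} (hY : Integrable (fun ω ↦ |Y ω| ^ n) μ)
    (hexp : ∀ᶠ s in 𝓝[>] 0, Integrable (fun ω ↦ Real.exp (s * Y ω)) μ) :
    Tendsto (iteratedDeriv n (mgf Y μ)) (𝓝[>] 0) (𝓝 (∫ ω, Y ω ^ n ∂μ)) := by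
  obtain ⟨s₀, hs₀ : 0 < s₀, hint⟩ := mem_nhdsGT_iff_exists_Ioo_subset.1 hexp
  have hinterior : Ioo 0 s₀ ⊆ interior (integrableExpSet Y μ) :=
    interior_maximal hint isOpen_Ioo
  have hmgf : (fun s ↦ ∫ ω, Y ω ^ n * Real.exp (s * Y ω) ∂μ) =ᶠ[𝓝[>] 0]
      iteratedDeriv n (mgf Y μ) := by
    filter_upwards [Ioo_mem_nhdsGT hs₀] with s hs
    exact (iteratedDeriv_mgf (hinterior hs) n).symm
  refine Tendsto.congr' hmgf ?_
  have hhalf : s₀ / 2 ∈ interior (integrableExpSet Y μ) := hinterior ⟨by linarith, by linarith⟩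
  have hYm := aemeasurable_of_mem_interior_integrableExpSet hhalf
  refine tendsto_integral_filter_of_dominated_convergence
    (fun ω ↦ |Y ω| ^ n * Real.exp (s₀ / 2 * Y ω) + |Y ω| ^ n) ?_ ?_
    ((integrable_pow_abs_mul_exp_of_mem_interior_integrableExpSet hhalf n).add hY) ?_
  · exact .of_forall fun s ↦ AEMeasurable.aestronglyMeasurable (by fun_prop)
  · filter_upwards [Ioo_mem_nhdsGT (half_pos hs₀)] with s hs
    refine .of_forall fun ω ↦ ?_
    rw [norm_mul, norm_pow, Real.norm_eq_abs, Real.norm_of_nonneg (Real.exp_nonneg _),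
      ← mul_add_one]
    gcongr
    exact exp_mul_le_exp_mul_add_one hs.1.le hs.2.le
  · refine .of_forall fun ω ↦ ?_
    have hcont : Continuous fun s ↦ Y ω ^ n * Real.exp (s * Y ω) := by fun_prop
    simpa using (hcont.tendsto 0).mono_left nhdsWithin_le_nhds

theorem integral_pow_eq_iteratedDeriv_of_mgf_eventuallyEq {M : ℝ → ℝ} {n : ℕ}
    (hY : Integrable (fun ω ↦ |Y ω| ^ n) μ) (hM : AnalyticAt ℝ M 0) (hM₀ : M 0 ≠ 0)
    (hmgf : mgf Y μ =ᶠ[𝓝[>] 0] M) :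
    ∫ ω, Y ω ^ n ∂μ = iteratedDeriv n M 0 := by
  -- Bochner integrals of non-integrable functions vanish, so `M s ≠ 0` forces `exp (s Y)` to be
  -- integrable.
  have hne : ∀ᶠ s in 𝓝[>] 0, M s ≠ 0 :=
    (hM.continuousAt.eventually_ne hM₀).filter_mono nhdsWithin_le_nhds
  have hexp : ∀ᶠ s in 𝓝[>] 0, Integrable (fun ω ↦ Real.exp (s * Y ω)) μ := by
    filter_upwards [hmgf, hne] with s hs hMs
    exact .of_integral_ne_zero (hs.trans_ne hMs)
  have hderiv : iteratedDeriv n (mgf Y μ) =ᶠ[𝓝[>] 0] iteratedDeriv n M := by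
    filter_upwards [eventually_eventually_nhdsWithin.2 hmgf, self_mem_nhdsWithin] with s hs hs₀
    rw [isOpen_Ioi.nhdsWithin_eq hs₀] at hs
    exact EventuallyEq.iteratedDeriv_eq n hs
  have hcont : ContinuousAt (iteratedDeriv n M) 0 := by
    rw [iteratedDeriv_eq_iterate]
    exact (hM.iterated_deriv n).continuousAt
  exact tendsto_nhds_unique ((tendsto_iteratedDeriv_mgf_nhdsGT_zero hY hexp).congr' hderiv)
    (hcont.tendsto.mono_left nhdsWithin_le_nhds)

end Cumulants

/-! ### Strictly stable laws -/

section StrictlyStable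

/-- The number `c` for which a strictly stable law with parameters `(β ^ 2, θ, τ)` has
characteristic function `exp (-c * k ^ β⁻¹)` on `k > 0`. Writing `β = √ν` keeps square roots out of
the formulas: `β⁻¹` is the stability index. -/
noncomputable def stableScale (β θ τ : ℝ) : ℂ :=
  Complex.exp (((β⁻¹ * τ + Real.eulerMascheroniConstant * (β⁻¹ - 1) : ℝ) : ℂ) +
    ((-(β⁻¹ * θ * (Real.pi / 2)) : ℝ) : ℂ) * Complex.I)

variable {β θ τ s : ℝ}

lemma abs_inv_mul_mul_pi_div_two_le (hβ : 0 < β) (hθ : |θ| ≤ β) :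
    |-(β⁻¹ * θ * (Real.pi / 2))| ≤ Real.pi / 2 := by
  rw [abs_neg, abs_mul, abs_mul, abs_of_pos (inv_pos.2 hβ), abs_of_pos (half_pos Real.pi_pos)]
  exact mul_le_of_le_one_left (by positivity) ((inv_mul_le_one₀ hβ).2 hθ)

lemma stableScale_re_nonneg (hβ : 0 < β) (hθ : |θ| ≤ β) : 0 ≤ (stableScale β θ τ).re := by
  rw [stableScale, Complex.exp_re]
  refine mul_nonneg (Real.exp_nonneg _) (Real.cos_nonneg_of_mem_Icc (abs_le.1 ?_))
  simpa [-abs_neg] using abs_inv_mul_mul_pi_div_two_le hβ hθ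

lemma stableScale_cpow_re (hβ : 0 < β) (hθ : |θ| ≤ β) :
    (stableScale β θ τ ^ ((s * β : ℝ) : ℂ)).re =
      Real.exp ((τ + Real.eulerMascheroniConstant * (1 - β)) * s) *
        Real.cos (Real.pi * (θ * s) / 2) := by
  have hlog : Complex.log (stableScale β θ τ) = _ := Complex.log_exp
    (by simpa using by linarith [abs_le.1 (abs_inv_mul_mul_pi_div_two_le hβ hθ), Real.pi_pos])
    (by simpa using by linarith [abs_le.1 (abs_inv_mul_mul_pi_div_two_le hβ hθ), Real.pi_pos])
  have hscale : stableScale β θ τ ≠ 0 := Complex.exp_ne_zero _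
  rw [Complex.cpow_def_of_ne_zero hscale, hlog, Complex.exp_re,
    Complex.re_mul_ofReal, Complex.im_mul_ofReal]
  have hexp : (β⁻¹ * τ + Real.eulerMascheroniConstant * (β⁻¹ - 1)) * (s * β) =
      (τ + Real.eulerMascheroniConstant * (1 - β)) * s := by
    field_simp
  have hcos : β⁻¹ * θ * (Real.pi / 2) * (s * β) = Real.pi * (θ * s) / 2 := by
    field_simp
  simp [hexp, hcos]

/-- The cumulant generating function of `log |X|` for a strictly stable `X` with parameters
`(β ^ 2, θ, τ)`. -/
noncomputable def logAbsCGF (β θ τ s : ℝ) : ℝ :=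
  (τ + Real.eulerMascheroniConstant * (1 - β)) * s +
    (Real.log (Real.Gamma (1 + -β * s)) - Real.log (Real.Gamma (1 + -s))) +
    (Real.log (Real.cos (Real.pi * (θ * s) / 2)) - Real.log (Real.cos (Real.pi * s / 2)))

/-- The Taylor coefficients of `logAbsCGF β θ τ` at `0`. -/
noncomputable def logAbsCGFCoeff (β θ τ : ℝ) (n : ℕ) : ℝ :=
  (if n = 1 then τ + Real.eulerMascheroniConstant * (1 - β) else 0) +
    logGammaCoeff n * ((-β) ^ n - (-1) ^ n) + logCosCoeff n * (θ ^ n - 1)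

lemma hasFPowerSeriesAt_logAbsCGF :
    HasFPowerSeriesAt (logAbsCGF β θ τ) (.ofScalars ℝ (logAbsCGFCoeff β θ τ)) 0 := by
  have hsmall (c : ℝ) : ∀ᶠ s in 𝓝 0, |c * s| < 1 :=
    ContinuousAt.eventually_lt (by fun_prop) continuousAt_const (by simp)
  refine hasFPowerSeriesAt_ofScalars_iff_hasSum.2 ?_
  filter_upwards [hsmall 1, hsmall (-1), hsmall (-β), hsmall θ] with s hs hneg hβ hθ
  rw [one_mul] at hs
  rw [neg_one_mul] at hneg
  have hlin : HasSum (fun n : ℕ ↦ (if n = 1 then τ + Real.eulerMascheroniConstant * (1 - β) else 0)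
      * s ^ n) ((τ + Real.eulerMascheroniConstant * (1 - β)) * s) := by
    refine (hasSum_ite_eq 1 _).congr_fun fun n ↦ ?_
    split_ifs with hn <;> simp [hn]
  have hΓ := (hasSum_logGammaCoeff_mul_pow hβ).sub (hasSum_logGammaCoeff_mul_pow hneg)
  have hcos := (hasSum_logCosCoeff_mul_pow hθ).sub (hasSum_logCosCoeff_mul_pow hs)
  refine ((hlin.add hΓ).add hcos).congr_fun fun n ↦ ?_
  rw [logAbsCGFCoeff, mul_pow, mul_pow, neg_pow s]
  ring

lemma iteratedDeriv_logAbsCGF (n : ℕ) :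
    iteratedDeriv n (logAbsCGF β θ τ) 0 = n.factorial * logAbsCGFCoeff β θ τ n :=
  iteratedDeriv_eq_of_hasFPowerSeriesAt_ofScalars hasFPowerSeriesAt_logAbsCGF n

lemma logAbsCGF_zero : logAbsCGF β θ τ 0 = 0 := by simp [logAbsCGF]

lemma iteratedDeriv_one_logAbsCGF : iteratedDeriv 1 (logAbsCGF β θ τ) 0 = τ := by
  rw [iteratedDeriv_logAbsCGF, logAbsCGFCoeff, if_pos rfl, logCosCoeff, logGammaCoeff]
  push_cast [Nat.factorial]
  ring

lemma iteratedDeriv_two_logAbsCGF : iteratedDeriv 2 (logAbsCGF β θ τ) 0 =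
    Real.pi ^ 2 / 4 * (1 - θ ^ 2) + Real.pi ^ 2 / 6 * (β ^ 2 - 1) := by
  rw [iteratedDeriv_logAbsCGF, logAbsCGFCoeff, if_neg (by simp), logCosCoeff, logGammaCoeff]
  push_cast [Nat.factorial, zetaR_two]
  ring

lemma iteratedDeriv_three_logAbsCGF :
    iteratedDeriv 3 (logAbsCGF β θ τ) 0 = 2 * zetaR 3 * (β ^ 3 - 1) := by
  rw [iteratedDeriv_logAbsCGF, logAbsCGFCoeff, if_neg (by simp), logCosCoeff, logGammaCoeff]
  push_cast [Nat.factorial]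
  ring

lemma iteratedDeriv_four_logAbsCGF : iteratedDeriv 4 (logAbsCGF β θ τ) 0 =
    Real.pi ^ 4 * ((1 - θ ^ 4) / 8 + (β ^ 4 - 1) / 15) := by
  rw [iteratedDeriv_logAbsCGF, logAbsCGFCoeff, if_neg (by simp), logCosCoeff, logGammaCoeff]
  push_cast [Nat.factorial, zetaR_four]
  ring

lemma iteratedDeriv_five_logAbsCGF :
    iteratedDeriv 5 (logAbsCGF β θ τ) 0 = 24 * zetaR 5 * (β ^ 5 - 1) := by
  rw [iteratedDeriv_logAbsCGF, logAbsCGFCoeff, if_neg (by simp), logCosCoeff, logGammaCoeff]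
  push_cast [Nat.factorial]
  ring

lemma exp_logAbsCGF (hs : |s| < 1) (hβs : β * s < 1) (hθs : |θ * s| < 1) :
    Real.exp (logAbsCGF β θ τ s) =
      Real.Gamma (1 - β * s) * (Real.exp ((τ + Real.eulerMascheroniConstant * (1 - β)) * s) *
        Real.cos (Real.pi * (θ * s) / 2)) / (Real.Gamma (1 - s) * Real.cos (Real.pi * s / 2)) := by
  have hs₁ : s < 1 := lt_of_abs_lt hs
  rw [logAbsCGF, Real.exp_add, Real.exp_add, Real.exp_sub, Real.exp_sub, neg_mul,
    ← sub_eq_add_neg, ← sub_eq_add_neg, Real.exp_log (Real.Gamma_pos_of_pos (by linarith)),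
    Real.exp_log (Real.Gamma_pos_of_pos (by linarith)), Real.exp_log (cos_pi_mul_div_two_pos hθs),
    Real.exp_log (cos_pi_mul_div_two_pos hs)]
  ring

namespace IsStrictlyStable

variable {Ω : Type*} [MeasureSpace Ω] {X : Ω → ℝ} {ν : ℝ}

lemma measurable (hX : IsStrictlyStable X ν θ τ) : Measurable X := hX.1

lemma nu_pos (hX : IsStrictlyStable X ν θ τ) : 0 < ν := by linarith [hX.2.1]

lemma abs_theta_le_one (hX : IsStrictlyStable X ν θ τ) : |θ| ≤ 1 :=
  hX.2.2.1.trans (min_le_left _ _)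

lemma abs_theta_le_sqrt (hX : IsStrictlyStable X ν θ τ) : |θ| ≤ √ν := by
  linarith [hX.abs_theta_le_one, hX.2.2.1.trans (min_le_right _ _)]

lemma ae_ne_zero (hX : IsStrictlyStable X ν θ τ) : ∀ᵐ ω, X ω ≠ 0 := by
  simpa [ae_iff] using hX.2.2.2.1

lemma integrable_abs_log_abs_pow (hX : IsStrictlyStable X ν θ τ) (n : ℕ) :
    Integrable (fun ω ↦ |Real.log (|X ω|)| ^ n) := hX.2.2.2.2.1 n

lemma charFun_map (hX : IsStrictlyStable X ν θ τ) {k : ℝ} (hk : 0 < k) :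
    charFun ((ℙ : Measure Ω).map X) k =
      Complex.exp (-(stableScale (√ν) θ τ * (k ^ (√ν)⁻¹ : ℝ))) := by
  have hν : ν ^ (-(1 / 2) : ℝ) = (√ν)⁻¹ := by
    rw [Real.rpow_neg hX.nu_pos.le, Real.sqrt_eq_rpow]
  have hchar := hX.2.2.2.2.2 k hk.ne'
  rw [hν, abs_of_pos hk, Real.sign_of_pos hk] at hchar
  rw [charFun_apply_real, integral_map hX.measurable.aemeasurable
    (Continuous.aestronglyMeasurable (by fun_prop)), stableScale, Real.rpow_def_of_pos hk,
    Complex.ofReal_exp, ← Complex.exp_add]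
  convert hchar using 3
  · ring_nf
  · push_cast
    ring_nf

lemma mgf_log_abs_eq_integral_abs_rpow (hX : IsStrictlyStable X ν θ τ) (s : ℝ) :
    mgf (fun ω ↦ Real.log |X ω|) ℙ s = ∫ x, |x| ^ s ∂(ℙ : Measure Ω).map X := by
  rw [integral_map hX.measurable.aemeasurable (Measurable.aestronglyMeasurable (by fun_prop))]
  refine integral_congr_ae ?_
  filter_upwards [hX.ae_ne_zero] with ω hω
  rw [Real.rpow_def_of_pos (abs_pos.2 hω), mul_comm]

variable [IsProbabilityMeasure (ℙ : Measure Ω)]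

lemma mgf_log_abs (hX : IsStrictlyStable X ν θ τ) (hs₀ : 0 < s) (hs₁ : s < 1) (hνs : √ν * s < 1) :
    mgf (fun ω ↦ Real.log |X ω|) ℙ s = Real.exp (logAbsCGF (√ν) θ τ s) := by
  have hβ : 0 < √ν := Real.sqrt_pos.2 hX.nu_pos
  have hprob := Measure.isProbabilityMeasure_map (μ := (ℙ : Measure Ω)) hX.measurable.aemeasurable
  have hs : |s| < 1 := by rwa [abs_of_pos hs₀]
  have hθs : |θ * s| < 1 := by
    rw [abs_mul]
    exact mul_lt_one_of_nonneg_of_lt_one_right hX.abs_theta_le_one (abs_nonneg s) hs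
  have h := integral_abs_rpow_mul_of_charFun_eq (inv_pos.2 hβ) hs₀ hs₁
    (by rwa [lt_inv_comm₀ hs₀ hβ, ← one_div, lt_div_iff₀ hs₀])
    (stableScale_re_nonneg hβ hX.abs_theta_le_sqrt) (Complex.exp_ne_zero _)
    fun k hk ↦ hX.charFun_map hk
  rw [hX.mgf_log_abs_eq_integral_abs_rpow, exp_logAbsCGF hs hνs hθs, eq_div_iff]
  · rwa [div_inv_eq_mul, stableScale_cpow_re hβ hX.abs_theta_le_sqrt, mul_comm s] at h
  · exact (mul_pos (Real.Gamma_pos_of_pos (by linarith)) (cos_pi_mul_div_two_pos hs)).ne'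

lemma mgf_log_abs_eventuallyEq (hX : IsStrictlyStable X ν θ τ) :
    mgf (fun ω ↦ Real.log |X ω|) ℙ =ᶠ[𝓝[>] 0] fun s ↦ Real.exp (logAbsCGF (√ν) θ τ s) := by
  have hsmall : ∀ᶠ s in 𝓝 0, √ν * s < 1 :=
    ContinuousAt.eventually_lt (by fun_prop) continuousAt_const (by simp)
  filter_upwards [Ioo_mem_nhdsGT one_pos, hsmall.filter_mono nhdsWithin_le_nhds] with s hs hνs
  exact hX.mgf_log_abs hs.1 hs.2 hνs

theorem integral_log_abs_pow (hX : IsStrictlyStable X ν θ τ) (n : ℕ) :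
    ∫ ω, Real.log |X ω| ^ n = iteratedDeriv n (fun s ↦ Real.exp (logAbsCGF (√ν) θ τ s)) 0 :=
  integral_pow_eq_iteratedDeriv_of_mgf_eventuallyEq (hX.integrable_abs_log_abs_pow n)
    hasFPowerSeriesAt_logAbsCGF.analyticAt.rexp (Real.exp_ne_zero _) hX.mgf_log_abs_eventuallyEq

end IsStrictlyStable

end StrictlyStable

theorem fifth_log_moment_of_strictlyStable {Ω : Type*} [MeasureSpace Ω]
    [IsProbabilityMeasure (ℙ : Measure Ω)] (X : Ω → ℝ) (ν θ τ : ℝ)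
    (hX : IsStrictlyStable X ν θ τ)
    (DV : ℝ) (hDV : DV = Real.pi ^ 2 / 4 * (1 - θ ^ 2) + Real.pi ^ 2 / 6 * (ν - 1)) :
    (∫ ω, (Real.log |X ω|) ^ 5) =
      τ ^ 5 + 10 * τ ^ 3 * DV + 20 * τ ^ 2 * zetaR 3 * (ν ^ ((3 : ℝ) / 2) - 1)
        + 15 * τ * DV ^ 2 + 5 * τ * Real.pi ^ 4 * ((1 - θ ^ 4) / 8 + (ν ^ 2 - 1) / 15)
        + 20 * zetaR 3 * (ν ^ ((3 : ℝ) / 2) - 1) * DV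
        + 24 * zetaR 5 * (ν ^ ((5 : ℝ) / 2) - 1) := by
  have hν : √ν ^ 2 = ν := Real.sq_sqrt hX.nu_pos.le
  have hν₄ : √ν ^ 4 = ν ^ 2 := by rw [pow_mul _ 2 2, hν]
  rw [hX.integral_log_abs_pow,
    iteratedDeriv_five_exp_comp hasFPowerSeriesAt_logAbsCGF.analyticAt logAbsCGF_zero,
    iteratedDeriv_one_logAbsCGF, iteratedDeriv_two_logAbsCGF, iteratedDeriv_three_logAbsCGF,
    iteratedDeriv_four_logAbsCGF, iteratedDeriv_five_logAbsCGF, hν, hν₄, ← hDV,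
    Real.rpow_div_two_eq_sqrt 3 hX.nu_pos.le, Real.rpow_div_two_eq_sqrt 5 hX.nu_pos.le]
  norm_cast
  ring
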